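/- The quasi-geodesic boundary of the Euclidean plane ℝ² is a single point: for any two integral quasi-geodesic rays g and h in ℝ² and every geometrically slowly-oscillating function f : ℝ² → ℂ, one has lim_{i→∞} f(g(i)) = lim_{i→∞} f(h(i)). -/

import Mathlib

open Filter Metric

/-- `g` is an integral `(q,Q)`-quasi-geodesic on the index set `s ⊆ ℕ`:
`|x − y|/q − Q ≤ d(g x, g y) ≤ q·|x − y| + Q` for all `x, y ∈ s`. -/
def IsQGOn {X : Type*} [MetricSpace X] (q Q : ℝ) (g : ℕ → X) (s : Set ℕ) : Prop :=
  ∀ x ∈ s, ∀ y ∈ s,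
    |(x : ℝ) - (y : ℝ)| / q - Q ≤ dist (g x) (g y) ∧
    dist (g x) (g y) ≤ q * |(x : ℝ) - (y : ℝ)| + Q

/-- An integral `(q,Q)`-quasi-geodesic ray: domain all positive integers. -/
def IsQGRay {X : Type*} [MetricSpace X] (q Q : ℝ) (g : ℕ → X) : Prop :=
  IsQGOn q Q g {i | 1 ≤ i}

/-- The `m`-cone `C_X(x₀,q,Q,g,m)`: all `x ∈ X` reachable as `h i`, `i ≥ m`, by an
integral `(q,Q)`-quasi-geodesic `h` starting at `x₀` and agreeing with `g` for indices `≤ m`. -/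
def Cone {X : Type*} [MetricSpace X] (x₀ : X) (q Q : ℝ) (g : ℕ → X) (m : ℕ) : Set X :=
  {x | ∃ (h : ℕ → X) (n i : ℕ), IsQGOn q Q h (Set.Icc 1 n) ∧ h 1 = x₀ ∧
      (∀ j, 1 ≤ j → j ≤ m → h j = g j) ∧ m ≤ i ∧ i ≤ n ∧ h i = x}

/-- `f` is slowly-oscillating: whenever `d(x₀,xₙ) → ∞` and `d(xₙ,yₙ) < M` for all `n ≥ 1`,
then `d(f xₙ, f yₙ) → 0`. -/
def SlowlyOscillating {X E : Type*} [MetricSpace X] [PseudoMetricSpace E] (f : X → E) : Prop :=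
  ∀ (x₀ : X) (x y : ℕ → X),
    Tendsto (fun n => dist x₀ (x n)) atTop atTop →
    (∃ M > (0 : ℝ), ∀ n, 1 ≤ n → dist (x n) (y n) < M) →
    Tendsto (fun n => dist (f (x n)) (f (y n))) atTop (nhds 0)

/-- `f` is geometrically slowly-oscillating: bounded, continuous, slowly-oscillating, and
for every `ε > 0`, `k ≥ 1`, `x₀` and integral `(k,k)`-quasi-geodesic ray `g` at `x₀`
there is `m ≥ 1` with `diam (f '' C_X(x₀,k,k,g,m)) < ε`. -/
def GeomSO {X E : Type*} [MetricSpace X] [PseudoMetricSpace E] (f : X → E) : Prop :=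
  Bornology.IsBounded (Set.range f) ∧ Continuous f ∧ SlowlyOscillating f ∧
    ∀ ε > (0 : ℝ), ∀ k : ℝ, 1 ≤ k → ∀ (x₀ : X) (g : ℕ → X),
      IsQGRay k k g → g 1 = x₀ →
      ∃ m : ℕ, 1 ≤ m ∧ Metric.diam (f '' Cone x₀ k k g m) < ε

/-- Every bounded subset of `X` can be covered by finitely many sets of diameter less than `M`. -/
def CoverM (X : Type*) [MetricSpace X] (M : ℝ) : Prop :=
  ∀ B : Set X, Bornology.IsBounded B →
    ∃ S : Finset (Set X), (∀ s ∈ S, Metric.diam s < M) ∧ B ⊆ ⋃ s ∈ S, (s : Set X)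

/-- `X` is integrally `(q,Q)`-quasi-geodesic: every two points are joined by a finite
integral `(q,Q)`-quasi-geodesic. -/
def IntegrallyQGWith (X : Type*) [MetricSpace X] (q Q : ℝ) : Prop :=
  ∀ x y : X, ∃ (g : ℕ → X) (n : ℕ), 1 ≤ n ∧ IsQGOn q Q g (Set.Icc 1 n) ∧ g 1 = x ∧ g n = y

/-- The Gromov product `⟨x,y⟩_a = (d(x,a) + d(y,a) − d(x,y))/2`. -/
noncomputable def gromovProd {X : Type*} [MetricSpace X] (a x y : X) : ℝ :=
  (dist x a + dist y a - dist x y) / 2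

/-- `X` is a geodesic space: any two points are joined by a geodesic segment. -/
def IsGeodesicSpace (X : Type*) [MetricSpace X] : Prop :=
  ∀ x y : X, ∃ γ : ℝ → X, γ 0 = x ∧ γ (dist x y) = y ∧
    ∀ s ∈ Set.Icc (0 : ℝ) (dist x y), ∀ t ∈ Set.Icc (0 : ℝ) (dist x y),
      dist (γ s) (γ t) = |s - t|

/-!
A geometrically slowly-oscillating function `f` cannot tell a quasi-geodesic ray `g` from a path `p`
that leaves `g` at a late time, as long as `p` moves away from the part of `g` already travelled:
the concatenation is then a quasi-geodesic with constants independent of the time of departure, so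
it stays in a fixed cone around `g`. In a normed space of dimension at least two there are two such
ways to leave.

* From `n • u` one can walk straight to `n • v` if `u` and `v` are linearly independent, hence `f`
  has the same asymptotics along `n • u` and `n • v`; the case of parallel `u` and `v` follows by
  comparing both with a third direction.
* From `g n` one can walk straight away from the origin if `‖g i‖ ≤ ‖g n‖` for all `i ≤ n`, and
  there are arbitrarily large such `n`. Hence the limit of `f` along `g` is its limit along straight
  rays.
-/

/-- The concatenation that follows `g` up to time `n` and `p` afterwards. The path `p` starts at
time `0`, and its starting point `p 0` is skipped in favour of `g n`. -/
def concatAt {X : Type*} (g : ℕ → X) (n : ℕ) (p : ℕ → X) (j : ℕ) : X :=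
  if j ≤ n then g j else p (j - n)

theorem concatAt_of_le {X : Type*} {g p : ℕ → X} {n j : ℕ} (hj : j ≤ n) : concatAt g n p j = g j :=
  if_pos hj

theorem concatAt_add {X : Type*} {g p : ℕ → X} {n t : ℕ} (ht : t ≠ 0) :
    concatAt g n p (n + t) = p t := by
  simp [concatAt, ht]

section MetricSpace

variable {X E : Type*} [MetricSpace X] [PseudoMetricSpace E]

theorem isQGOn_of_forall_le {q Q : ℝ} {g : ℕ → X} {s : Set ℕ}
    (hg : ∀ x ∈ s, ∀ y ∈ s, x ≤ y → ((y : ℝ) - x) / q - Q ≤ dist (g x) (g y) ∧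
      dist (g x) (g y) ≤ q * ((y : ℝ) - x) + Q) :
    IsQGOn q Q g s := by
  intro x hx y hy
  wlog hxy : x ≤ y generalizing x y
  · rw [abs_sub_comm, dist_comm]
    exact this y hy x hx (le_of_not_ge hxy)
  · rw [abs_sub_comm, abs_of_nonneg (sub_nonneg.2 (Nat.cast_le.2 hxy))]
    exact hg x hx y hy hxy

theorem IsQGOn.additive_const_nonneg {q Q : ℝ} {g : ℕ → X} {s : Set ℕ} (hg : IsQGOn q Q g s)
    (hs : s.Nonempty) : 0 ≤ Q := by
  obtain ⟨x, hx⟩ := hs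
  simpa using (hg x hx x hx).2

theorem IsQGOn.mono {q q' Q Q' : ℝ} {g : ℕ → X} {s : Set ℕ} (hg : IsQGOn q Q g s)
    (hq : 0 < q) (hqq' : q ≤ q') (hQQ' : Q ≤ Q') : IsQGOn q' Q' g s := by
  intro x hx y hy
  obtain ⟨hlower, hupper⟩ := hg x hx y hy
  constructor
  · calc |(x : ℝ) - y| / q' - Q' ≤ |(x : ℝ) - y| / q - Q := by gcongr
      _ ≤ dist (g x) (g y) := hlower
  · calc dist (g x) (g y) ≤ q * |(x : ℝ) - y| + Q := hupper
      _ ≤ q' * |(x : ℝ) - y| + Q' := by gcongr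

theorem IsQGRay.tendsto_dist_atTop {q Q : ℝ} {g : ℕ → X} (hg : IsQGRay q Q g) (hq : 0 < q)
    (x : X) : Tendsto (fun i => dist (g i) x) atTop atTop := by
  have hlin : Tendsto (fun i : ℕ => (i : ℝ) / q + (-(1 / q) - Q - dist (g 1) x)) atTop atTop :=
    tendsto_atTop_add_const_right _ _ (tendsto_natCast_atTop_atTop.atTop_div_const hq)
  refine tendsto_atTop_mono' _ ?_ hlin
  filter_upwards [eventually_ge_atTop 1] with i hi
  have hlower : (i : ℝ) / q - 1 / q - Q ≤ dist (g i) (g 1) := by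
    have h := (hg i hi 1 (le_refl 1)).1
    rwa [Nat.cast_one, abs_of_nonneg (sub_nonneg.2 (Nat.one_le_cast.2 hi)), sub_div] at h
  linarith [dist_triangle_right (g i) (g 1) x]

theorem mem_cone_of_isQGRay {q Q : ℝ} {g h : ℕ → X} {m i : ℕ} (hh : IsQGRay q Q h)
    (hm : 1 ≤ m) (hgh : ∀ j, 1 ≤ j → j ≤ m → h j = g j) (hi : m ≤ i) :
    h i ∈ Cone (g 1) q Q g m :=
  ⟨h, i, i, fun x hx y hy => hh x hx.1 y hy.1, hgh 1 le_rfl hm, hgh, hi, le_rfl, rfl⟩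

theorem GeomSO.exists_forall_dist_lt {f : X → E} (hf : GeomSO f) {k : ℝ} (hk : 1 ≤ k)
    {g : ℕ → X} (hg : IsQGRay k k g) {ε : ℝ} (hε : 0 < ε) :
    ∃ m, 1 ≤ m ∧ ∀ h : ℕ → X, IsQGRay k k h → (∀ j, 1 ≤ j → j ≤ m → h j = g j) →
      ∀ i j, m ≤ i → m ≤ j → dist (f (g i)) (f (h j)) < ε := by
  obtain ⟨hbounded, -, -, hcone⟩ := hf
  obtain ⟨m, hm, hdiam⟩ := hcone ε hε k hk (g 1) g hg rfl
  refine ⟨m, hm, fun h hh hgh i j hi hj => lt_of_le_of_lt ?_ hdiam⟩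
  exact dist_le_diam_of_mem (hbounded.subset (Set.image_subset_range f _))
    (Set.mem_image_of_mem f (mem_cone_of_isQGRay hg hm (fun _ _ _ => rfl) hi))
    (Set.mem_image_of_mem f (mem_cone_of_isQGRay hh hm hgh hj))

-- Since `p` departs from `g i` at least at the rate `1 / C`, the distance from `g i` to `p t`
-- bounds both legs `dist (g n) (p t)` and `dist (g i) (g n)`.
theorem dist_bounds_of_departs {q Q C δ : ℝ} {g p : ℕ → X} {n i t : ℕ} (hC : 0 ≤ C)
    (hg : IsQGOn q Q g (Set.Icc 1 n)) (hp : IsQGOn q Q p Set.univ) (hδ : dist (g n) (p 0) ≤ δ)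
    (hi : i ∈ Set.Icc 1 n) (hdep : dist (p 0) (p t) ≤ C * dist (g i) (p t)) :
    ((n + t : ℝ) - i) / ((2 * C + 1) * q) - (2 * Q + δ) ≤ dist (g i) (p t) ∧
      dist (g i) (p t) ≤ q * ((n + t : ℝ) - i) + (2 * Q + δ) := by
  obtain ⟨hg_lower, hg_upper⟩ := hg i hi n ⟨hi.1.trans hi.2, le_rfl⟩
  obtain ⟨hp_lower, hp_upper⟩ := hp 0 trivial t trivial
  rw [abs_sub_comm, abs_of_nonneg (sub_nonneg.2 (Nat.cast_le.2 hi.2))] at hg_lower hg_upper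
  rw [abs_sub_comm, Nat.cast_zero, sub_zero, Nat.abs_cast] at hp_lower hp_upper
  have hQ : 0 ≤ Q := hp.additive_const_nonneg Set.univ_nonempty
  have hδ0 : 0 ≤ δ := dist_nonneg.trans hδ
  have hgp : dist (g i) (p t) ≤ dist (g i) (g n) + dist (g n) (p 0) + dist (p 0) (p t) :=
    dist_triangle4 _ _ _ _
  have hgg : dist (g i) (g n) ≤ dist (g i) (p t) + dist (p 0) (p t) + dist (g n) (p 0) := by
    simpa only [dist_comm] using dist_triangle4 (g i) (p t) (p 0) (g n)
  constructor
  · have hlegs : ((n + t : ℝ) - i) / q - (2 * Q + δ) ≤ (2 * C + 1) * dist (g i) (p t) := by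
      have hsplit : ((n + t : ℝ) - i) / q = (n - i) / q + t / q := by ring
      linarith
    rw [mul_comm, ← div_div, sub_le_iff_le_add, div_le_iff₀ (by positivity)]
    nlinarith [mul_nonneg hC (by positivity : 0 ≤ 2 * Q + δ)]
  · linarith

theorem isQGRay_concatAt {q Q C δ : ℝ} {g p : ℕ → X} {n : ℕ} (hq : 0 < q) (hC : 0 ≤ C)
    (hg : IsQGOn q Q g (Set.Icc 1 n)) (hp : IsQGOn q Q p Set.univ) (hδ : dist (g n) (p 0) ≤ δ)
    (hdep : ∀ i ∈ Set.Icc 1 n, ∀ t, dist (p 0) (p t) ≤ C * dist (g i) (p t)) :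
    IsQGRay ((2 * C + 1) * q) (2 * Q + δ) (concatAt g n p) := by
  have hqC : q ≤ (2 * C + 1) * q := le_mul_of_one_le_left hq.le (by linarith)
  have hQδ : Q ≤ 2 * Q + δ := by
    linarith [hp.additive_const_nonneg Set.univ_nonempty, dist_nonneg.trans hδ]
  refine isQGOn_of_forall_le fun i (hi : 1 ≤ i) j (hj : 1 ≤ j) hij => ?_
  have hij' : (i : ℝ) ≤ j := Nat.cast_le.2 hij
  rcases le_or_gt j n with hjn | hjn
  · rw [concatAt_of_le hjn, concatAt_of_le (hij.trans hjn)]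
    have h := hg.mono hq hqC hQδ i ⟨hi, hij.trans hjn⟩ j ⟨hj, hjn⟩
    rwa [abs_sub_comm, abs_of_nonneg (sub_nonneg.2 hij')] at h
  obtain ⟨t, rfl⟩ := Nat.exists_eq_add_of_lt hjn
  rw [add_assoc, concatAt_add t.succ_ne_zero]
  rcases le_or_gt i n with hin | hin
  · rw [concatAt_of_le hin]
    obtain ⟨hlower, hupper⟩ := dist_bounds_of_departs hC hg hp hδ ⟨hi, hin⟩
      (hdep i ⟨hi, hin⟩ (t + 1))
    push_cast at hlower hupper hij' ⊢
    refine ⟨hlower, hupper.trans ?_⟩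
    gcongr
    linarith
  · obtain ⟨s, rfl⟩ := Nat.exists_eq_add_of_lt hin
    rw [add_assoc, concatAt_add s.succ_ne_zero]
    have h := hp.mono hq hqC hQδ (s + 1) trivial (t + 1) trivial
    have hst : ((s + 1 : ℕ) : ℝ) ≤ (t + 1 : ℕ) := Nat.cast_le.2 (by lia)
    rw [abs_sub_comm, abs_of_nonneg (sub_nonneg.2 hst)] at h
    simpa only [Nat.cast_add, add_sub_add_left_eq_sub] using h

theorem GeomSO.exists_forall_dist_lt_of_departs {f : X → E} (hf : GeomSO f) {q Q : ℝ} (hq : 0 < q)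
    {g : ℕ → X} (hg : IsQGRay q Q g) {C : ℝ} (hC : 0 ≤ C) (δ : ℝ) {ε : ℝ} (hε : 0 < ε) :
    ∃ m, ∀ n p, m ≤ n → IsQGOn q Q p Set.univ → dist (g n) (p 0) ≤ δ →
      (∀ i ∈ Set.Icc 1 n, ∀ t, dist (p 0) (p t) ≤ C * dist (g i) (p t)) →
      ∀ t ≠ 0, dist (f (g n)) (f (p t)) < ε := by
  set k := max 1 (max ((2 * C + 1) * q) (max (2 * Q + δ) (max q Q)))
  obtain ⟨m, -, hclose⟩ := hf.exists_forall_dist_lt (k := k) (le_max_left _ _)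
    (hg.mono hq (by simp [k]) (by simp [k])) hε
  refine ⟨m, fun n p hmn hp hδ hdep t ht => ?_⟩
  have hconcat : IsQGRay k k (concatAt g n p) :=
    (isQGRay_concatAt hq hC (fun x hx y hy => hg x hx.1 y hy.1) hp hδ hdep).mono
      (by positivity) (by simp [k]) (by simp [k])
  rw [← concatAt_add (g := g) (n := n) (p := p) ht]
  exact hclose _ hconcat (fun j _ hj => concatAt_of_le (hj.trans hmn)) n (n + t) hmn (by lia)

end MetricSpace

section NormedSpace

variable {V E : Type*} [NormedAddCommGroup V] [NormedSpace ℝ V]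

theorem dist_add_natCast_smul (x w : V) (s t : ℕ) :
    dist (x + (s : ℝ) • w) (x + (t : ℝ) • w) = |(s : ℝ) - t| * ‖w‖ := by
  rw [dist_add_left, dist_eq_norm, ← sub_smul, norm_smul, Real.norm_eq_abs]

theorem isQGOn_add_natCast_smul (x : V) {w : V} (hw : w ≠ 0) (s : Set ℕ) :
    IsQGOn (max ‖w‖ ‖w‖⁻¹) 0 (fun t : ℕ => x + (t : ℝ) • w) s := by
  intro i _ j _
  have hw' : 0 < ‖w‖ := norm_pos_iff.2 hw
  rw [dist_add_natCast_smul, sub_zero, add_zero, mul_comm (max _ _)]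
  constructor
  · rw [div_eq_mul_inv]
    gcongr
    exact inv_le_of_inv_le₀ hw' (le_max_right _ _)
  · gcongr
    exact le_max_left _ _

theorem exists_norm_smul_le_mul_norm_smul_add_smul {u w : V} (huw : LinearIndependent ℝ ![u, w]) :
    ∃ C, 0 ≤ C ∧ ∀ a b : ℝ, ‖b • w‖ ≤ C * ‖a • u + b • w‖ := by
  obtain ⟨K, -, hK⟩ := (Fintype.linearCombination ℝ ![u, w]).exists_antilipschitzWith
    (Fintype.linearIndependent_iff'.1 huw)
  refine ⟨K * ‖w‖, by positivity, fun a b => ?_⟩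
  have hcoeff : ‖b‖ ≤ K * ‖a • u + b • w‖ :=
    calc ‖b‖ ≤ ‖![a, b]‖ := norm_le_pi_norm ![a, b] 1
      _ ≤ K * ‖Fintype.linearCombination ℝ ![u, w] ![a, b]‖ :=
        hK.le_mul_norm (map_zero _) _
      _ = K * ‖a • u + b • w‖ := by simp [Fintype.linearCombination_apply]
  rw [norm_smul, mul_right_comm]
  gcongr

theorem le_dist_smul_add_smul_of_norm_le {u x : V} (hu : ‖u‖ = 1) {r t : ℝ} (hx : ‖x‖ ≤ r)
    (ht : 0 ≤ t) : t ≤ dist x (r • u + t • u) := by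
  have hr : 0 ≤ r := (norm_nonneg x).trans hx
  have hnorm : ‖r • u + t • u‖ = r + t := by
    rw [← add_smul, norm_smul, hu, mul_one, Real.norm_of_nonneg (by positivity)]
  rw [dist_comm, dist_eq_norm]
  linarith [norm_sub_norm_le (r • u + t • u) x]

theorem exists_norm_eq_one_dist_ceil_smul_le_one {x : V} (hx : x ≠ 0) :
    ∃ u : V, ‖u‖ = 1 ∧ dist x ((⌈‖x‖⌉₊ : ℝ) • u) ≤ 1 := by
  have hx' : ‖x‖ ≠ 0 := norm_ne_zero_iff.2 hx
  have hu : ‖‖x‖⁻¹ • x‖ = 1 := norm_smul_inv_norm (𝕜 := ℝ) hx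
  refine ⟨‖x‖⁻¹ • x, hu, ?_⟩
  calc dist x ((⌈‖x‖⌉₊ : ℝ) • ‖x‖⁻¹ • x)
      = dist (‖x‖ • ‖x‖⁻¹ • x) ((⌈‖x‖⌉₊ : ℝ) • ‖x‖⁻¹ • x) := by rw [smul_inv_smul₀ hx']
    _ = |‖x‖ - ⌈‖x‖⌉₊| := by
      rw [dist_eq_norm, ← sub_smul, norm_smul, hu, mul_one, Real.norm_eq_abs]
    _ ≤ 1 := by
      rw [abs_le]
      constructor <;> linarith [Nat.le_ceil ‖x‖, Nat.ceil_lt_add_one (norm_nonneg x)]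

variable [PseudoMetricSpace E] {f : V → E}

theorem GeomSO.tendsto_dist_smul_of_linearIndependent (hf : GeomSO f) {u v : V}
    (huv : LinearIndependent ℝ ![u, v]) :
    Tendsto (fun i : ℕ => dist (f ((i : ℝ) • u)) (f ((i : ℝ) • v))) atTop (nhds 0) := by
  have hu : u ≠ 0 := huv.ne_zero 0
  have huw : LinearIndependent ℝ ![u, v - u] := by
    simpa [neg_add_eq_sub] using (LinearIndependent.pair_add_smul_right_iff (-1 : ℝ)).2 huv
  have hw : v - u ≠ 0 := huw.ne_zero 1
  obtain ⟨C, hC, hCbound⟩ := exists_norm_smul_le_mul_norm_smul_add_smul huw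
  set q := max (max ‖u‖ ‖u‖⁻¹) (max ‖v - u‖ ‖v - u‖⁻¹)
  have hu' : 0 < max ‖u‖ ‖u‖⁻¹ := lt_max_of_lt_left (norm_pos_iff.2 hu)
  have hw' : 0 < max ‖v - u‖ ‖v - u‖⁻¹ := lt_max_of_lt_left (norm_pos_iff.2 hw)
  have hray : IsQGRay q 0 (fun i : ℕ => (i : ℝ) • u) := by
    simpa only [IsQGRay, zero_add] using
      (isQGOn_add_natCast_smul 0 hu _).mono hu' (le_max_left _ _) le_rfl
  refine Metric.tendsto_atTop.2 fun ε hε => ?_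
  obtain ⟨m, hm⟩ := hf.exists_forall_dist_lt_of_departs (lt_max_of_lt_left hu') hray hC 0 hε
  refine ⟨max m 1, fun n hn => ?_⟩
  have hclose := hm n (fun t => (n : ℝ) • u + (t : ℝ) • (v - u)) (le_of_max_le_left hn)
    ((isQGOn_add_natCast_smul _ hw _).mono hw' (le_max_right _ _) le_rfl) (by simp) ?_
    n (Nat.one_le_iff_ne_zero.1 (le_of_max_le_right hn))
  · simpa [smul_sub] using hclose
  · intro i _ t
    calc dist ((n : ℝ) • u + ((0 : ℕ) : ℝ) • (v - u)) ((n : ℝ) • u + (t : ℝ) • (v - u))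
        = ‖(t : ℝ) • (v - u)‖ := by simp
      _ ≤ C * ‖((n : ℝ) - i) • u + (t : ℝ) • (v - u)‖ := hCbound _ _
      _ = C * dist ((i : ℝ) • u) ((n : ℝ) • u + (t : ℝ) • (v - u)) := by
        rw [dist_comm, dist_eq_norm, sub_smul, sub_add_eq_add_sub]

theorem GeomSO.tendsto_dist_smul (hf : GeomSO f) (hV : 1 < Module.rank ℝ V) {u v : V}
    (hu : u ≠ 0) (hv : v ≠ 0) :
    Tendsto (fun i : ℕ => dist (f ((i : ℝ) • u)) (f ((i : ℝ) • v))) atTop (nhds 0) := by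
  by_cases huv : LinearIndependent ℝ ![u, v]
  · exact hf.tendsto_dist_smul_of_linearIndependent huv
  obtain ⟨w, huw⟩ := exists_linearIndependent_pair_of_one_lt_rank hV hu
  have hwv : LinearIndependent ℝ ![w, v] := by
    obtain ⟨a, rfl⟩ : ∃ a : ℝ, a • u = v := by
      simpa [LinearIndependent.pair_iff' hu] using huv
    have ha : a ≠ 0 := left_ne_zero_of_smul hv
    simpa using (LinearIndependent.pair_add_smul_add_smul_iff 0 1 a 0).2
      ⟨huw, by simpa using ha.symm⟩
  refine squeeze_zero (fun _ => dist_nonneg) (fun i => dist_triangle _ (f ((i : ℝ) • w)) _) ?_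
  simpa using (hf.tendsto_dist_smul_of_linearIndependent huw).add
    (hf.tendsto_dist_smul_of_linearIndependent hwv)

theorem GeomSO.exists_ge_forall_dist_smul_lt (hf : GeomSO f) {q Q : ℝ} (hq : 1 ≤ q) (hQ : 0 ≤ Q)
    {g : ℕ → V} (hg : IsQGRay q Q g) {ε : ℝ} (hε : 0 < ε) (N : ℕ) :
    ∃ n ≥ N, ∃ u : V, ‖u‖ = 1 ∧ ∀ᶠ l : ℕ in atTop, dist (f (g n)) (f ((l : ℝ) • u)) < ε := by
  have hq0 : 0 < q := one_pos.trans_le hq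
  obtain ⟨m, hm⟩ := hf.exists_forall_dist_lt_of_departs hq0 hg zero_le_one 1 hε
  obtain ⟨n, hn, hrecord⟩ : ∃ n ≥ max (max m N) 1, ∀ i < n, ‖g i‖ < ‖g n‖ :=
    high_scores (by simpa using hg.tendsto_dist_atTop hq0 0) _
  have hgn : g n ≠ 0 := norm_pos_iff.1 ((norm_nonneg (g 0)).trans_lt (hrecord 0 (by lia)))
  obtain ⟨u, hu, hdist⟩ := exists_norm_eq_one_dist_ceil_smul_le_one hgn
  set r := ⌈‖g n‖⌉₊
  refine ⟨n, by lia, u, hu, ?_⟩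
  have hclose := hm n (fun t => (r : ℝ) • u + (t : ℝ) • u) (by lia) ?_ (by simpa using hdist) ?_
  · filter_upwards [eventually_gt_atTop r] with l hl
    obtain ⟨t, rfl⟩ := Nat.exists_eq_add_of_lt hl
    simpa [add_smul, add_assoc] using hclose (t + 1) t.succ_ne_zero
  · have hline := isQGOn_add_natCast_smul ((r : ℝ) • u) (norm_ne_zero_iff.1 (hu ▸ one_ne_zero))
      Set.univ
    rw [hu, inv_one, max_self] at hline
    exact hline.mono one_pos hq hQ
  · intro i hi t
    have hgi : ‖g i‖ ≤ r := by
      rcases hi.2.lt_or_eq with hin | rfl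
      · exact (hrecord i hin).le.trans (Nat.le_ceil _)
      · exact Nat.le_ceil _
    rw [one_mul, dist_add_natCast_smul, hu, mul_one, abs_sub_comm, Nat.cast_zero, sub_zero,
      Nat.abs_cast]
    exact le_dist_smul_add_smul_of_norm_le hu hgi t.cast_nonneg

theorem GeomSO.tendsto_smul_of_tendsto_isQGRay (hf : GeomSO f) (hV : 1 < Module.rank ℝ V)
    {q Q : ℝ} (hq : 1 ≤ q) (hQ : 0 ≤ Q) {g : ℕ → V} (hg : IsQGRay q Q g) {L : E}
    (hL : Tendsto (fun i => f (g i)) atTop (nhds L)) {u : V} (hu : u ≠ 0) :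
    Tendsto (fun l : ℕ => f ((l : ℝ) • u)) atTop (nhds L) := by
  refine Metric.tendsto_nhds.2 fun ε hε => ?_
  obtain ⟨N, hN⟩ := Metric.tendsto_atTop.1 hL (ε / 3) (by positivity)
  obtain ⟨n, hn, v, hv, hgv⟩ := hf.exists_ge_forall_dist_smul_lt hq hQ hg (ε := ε / 3)
    (by positivity) N
  have huv : ∀ᶠ l : ℕ in atTop, dist (f ((l : ℝ) • u)) (f ((l : ℝ) • v)) < ε / 3 :=
    (hf.tendsto_dist_smul hV hu (norm_ne_zero_iff.1 (hv ▸ one_ne_zero))).eventually_lt_const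
      (by positivity)
  filter_upwards [hgv, huv] with l hgvl huvl
  rw [dist_comm] at hgvl
  linarith [hN n hn, dist_triangle4 (f ((l : ℝ) • u)) (f ((l : ℝ) • v)) (f (g n)) L]

end NormedSpace

theorem stmt_12_general {V E : Type*} [NormedAddCommGroup V] [NormedSpace ℝ V] [MetricSpace E]
    (hV : 1 < Module.rank ℝ V) (g h : ℕ → V)
    (hg : ∃ q Q : ℝ, 1 ≤ q ∧ 0 ≤ Q ∧ IsQGRay q Q g)
    (hh : ∃ q Q : ℝ, 1 ≤ q ∧ 0 ≤ Q ∧ IsQGRay q Q h)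
    (f : V → E) (hf : GeomSO f) (Lg Lh : E)
    (hLg : Tendsto (fun i => f (g i)) atTop (nhds Lg))
    (hLh : Tendsto (fun i => f (h i)) atTop (nhds Lh)) :
    Lg = Lh := by
  obtain ⟨qg, Qg, hqg, hQg, hg⟩ := hg
  obtain ⟨qh, Qh, hqh, hQh, hh⟩ := hh
  obtain ⟨u, hu⟩ := (rank_pos_iff_exists_ne_zero (R := ℝ) (M := V)).1 (one_pos.trans hV)
  exact tendsto_nhds_unique (hf.tendsto_smul_of_tendsto_isQGRay hV hqg hQg hg hLg hu)
    (hf.tendsto_smul_of_tendsto_isQGRay hV hqh hQh hh hLh hu)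

/-- Corollary 4.10: the quasi-geodesic boundary of the Euclidean plane is one point. -/
theorem stmt_12 (g h : ℕ → EuclideanSpace ℝ (Fin 2))
    (hg : ∃ q Q : ℝ, 1 ≤ q ∧ 0 ≤ Q ∧ IsQGRay q Q g)
    (hh : ∃ q Q : ℝ, 1 ≤ q ∧ 0 ≤ Q ∧ IsQGRay q Q h)
    (f : EuclideanSpace ℝ (Fin 2) → ℂ) (hf : GeomSO f) (Lg Lh : ℂ)
    (hLg : Tendsto (fun i => f (g i)) atTop (nhds Lg))
    (hLh : Tendsto (fun i => f (h i)) atTop (nhds Lh)) :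
    Lg = Lh :=
  stmt_12_general (Module.lt_rank_of_lt_finrank (by simp)) g h hg hh f hf Lg Lh hLg hLh
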